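/- For each n let V_n be an n×n orthogonal matrix, let f, g: [0,1] → R_{>0} be bounded Riemann-integrable functions, and set Σ_X = V_n diag(f(1/n), …, f(n/n)) V_nᵀ and Σ_ε = V_n diag(g(1/n), …, g(n/n)) V_nᵀ. Let X ~ N(0, Σ_X) and ε ~ N(0, Σ_ε) be independent. Then, as n → ∞, the following convergences hold in probability: (1/n)‖X‖² → ∫_0^1 f(x) dx, (1/n)‖ε‖² → ∫_0^1 g(x) dx, (1/n) εᵀX → 0, and (1/n) XᵀΣ_εX → ∫_0^1 f(x)g(x) dx. -/

import Mathlib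

open MeasureTheory ProbabilityTheory Filter Topology Matrix

noncomputable section

/-- Sample mean `X̄ = (1/n) Σ_i X_i`. -/
def sampleMean {ι : Type*} [Fintype ι] (x : ι → ℝ) : ℝ := (∑ i, x i) / (Fintype.card ι : ℝ)

/-- Sample covariance `T_n = (1/n) Σ_i (X_i - X̄)(Y_i - Ȳ)`. -/
def sampleCov {ι : Type*} [Fintype ι] (x y : ι → ℝ) : ℝ :=
  (∑ i, (x i - sampleMean x) * (y i - sampleMean y)) / (Fintype.card ι : ℝ)

/-- Sample correlation `ρₙ`. -/
def sampleCorr {ι : Type*} [Fintype ι] (x y : ι → ℝ) : ℝ :=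
  (∑ i, (x i - sampleMean x) * (y i - sampleMean y)) /
    (Real.sqrt (∑ i, (x i - sampleMean x) ^ 2) * Real.sqrt (∑ i, (y i - sampleMean y) ^ 2))

/-- Convergence in distribution: weak convergence of the laws, tested against
bounded continuous functions. -/
def TendstoInDistribution (μ : ℕ → Measure ℝ) (ν : Measure ℝ) : Prop :=
  ∀ f : BoundedContinuousFunction ℝ ℝ,
    Tendsto (fun n => ∫ x, f x ∂(μ n)) atTop (𝓝 (∫ x, f x ∂ν))

/-- Convergence in probability to a constant, for a sequence of laws on `ℝ`. -/
def TendstoInProbability (μ : ℕ → Measure ℝ) (c : ℝ) : Prop :=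
  ∀ ε : ℝ, 0 < ε → Tendsto (fun n => μ n {x | ε ≤ |x - c|}) atTop (𝓝 0)

/-- `μ` is the centered multivariate Gaussian law `N(0, S)` on `ℝ^n`, characterized à la
Cramér–Wold: every linear functional `⟨a, ·⟩` has law `N(0, aᵀ S a)`. -/
def IsCenteredGaussian {n : ℕ} (μ : Measure (Fin n → ℝ)) (S : Matrix (Fin n) (Fin n) ℝ) : Prop :=
  IsProbabilityMeasure μ ∧
    ∀ a : Fin n → ℝ,
      Measure.map (fun x => ∑ i, a i * x i) μ =
        gaussianReal 0 (Real.toNNReal (a ⬝ᵥ S.mulVec a))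

/-- The matrix `V diag(h(1/n), …, h(n/n)) Vᵀ`. -/
def specMatrix (n : ℕ) (V : Matrix (Fin n) (Fin n) ℝ) (h : ℝ → ℝ) : Matrix (Fin n) (Fin n) ℝ :=
  V * Matrix.diagonal (fun i : Fin n => h ((((i : ℕ) : ℝ) + 1) / n)) * Vᵀ

lemma pi_map_lin {n : ℕ} (b : Fin n → ℝ) :
    (Measure.pi (fun _ : Fin n => gaussianReal 0 1)).map (fun x => ∑ i, b i * x i)
      = gaussianReal 0 (Real.toNNReal (∑ i, b i ^ 2)) := by
  have hm : Measurable (fun x : Fin n → ℝ => ∑ i, b i * x i) := by fun_prop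
  have := Measure.isProbabilityMeasure_map (μ := Measure.pi (fun _ : Fin n => gaussianReal 0 1)) hm.aemeasurable
  apply Measure.ext_of_charFun
  ext t
  rw [charFun_apply_real, integral_map hm.aemeasurable (by fun_prop), charFun_gaussianReal]
  have h1 : ∀ x : Fin n → ℝ, Complex.exp (t * ((∑ i, b i * x i : ℝ) : ℂ) * Complex.I)
      = ∏ i, Complex.exp (((t * b i : ℝ) : ℂ) * (x i : ℂ) * Complex.I) := by
    intro x
    rw [← Complex.exp_sum]
    congr 1
    push_cast
    rw [Finset.mul_sum, Finset.sum_mul]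
    refine Finset.sum_congr rfl fun i _ => by ring
  simp_rw [h1]
  rw [integral_fintype_prod_eq_prod (f := fun i (x : ℝ) => Complex.exp (((t * b i : ℝ) : ℂ) * (x : ℂ) * Complex.I))]
  simp_rw [← charFun_apply_real, charFun_gaussianReal]
  rw [← Complex.exp_sum]
  congr 1
  rw [Real.coe_toNNReal _ (Finset.sum_nonneg fun i _ => sq_nonneg _)]
  push_cast
  simp only [mul_zero, zero_mul, zero_sub, one_mul, Finset.sum_mul, Finset.sum_div, Finset.sum_neg_distrib]
  congr 1
  refine Finset.sum_congr rfl fun i _ => by ring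

def lift1 {n : ℕ} (V : Matrix (Fin n) (Fin n) ℝ) (d : Fin n → ℝ) (x : Fin n → ℝ) : Fin n → ℝ :=
  V.mulVec (fun i => √(d i) * x i)

lemma lift1_meas {n : ℕ} (V : Matrix (Fin n) (Fin n) ℝ) (d : Fin n → ℝ) :
    Measurable (lift1 V d) := by
  unfold lift1
  refine measurable_pi_lambda _ fun i => ?_
  simp only [Matrix.mulVec, dotProduct]
  fun_prop

lemma gauss_eq {n : ℕ} (V : Matrix (Fin n) (Fin n) ℝ) (h : ℝ → ℝ)
    (hh : ∀ i : Fin n, 0 ≤ h ((((i : ℕ) : ℝ) + 1) / n)) (μ : Measure (Fin n → ℝ))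
    (hμ : IsCenteredGaussian μ (specMatrix n V h)) :
    μ = (Measure.pi (fun _ : Fin n => gaussianReal 0 1)).map
      (lift1 V (fun i : Fin n => h ((((i : ℕ) : ℝ) + 1) / n))) := by
  obtain ⟨hp, hμ⟩ := hμ
  have hm := lift1_meas V (fun i : Fin n => h ((((i : ℕ) : ℝ) + 1) / n))
  have := Measure.isProbabilityMeasure_map (μ := Measure.pi (fun _ : Fin n => gaussianReal 0 1)) hm.aemeasurable
  apply Measure.ext_of_charFunDual
  ext L
  rw [charFunDual_eq_charFun_map_one, charFunDual_eq_charFun_map_one]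
  congr 1
  set a : Fin n → ℝ := fun i => L (Pi.single i 1) with ha
  have hL : (L : (Fin n → ℝ) → ℝ) = fun x => ∑ i, a i * x i := by
    ext x
    conv_lhs => rw [pi_eq_sum_univ' x]
    simp [ha, map_sum, mul_comm]
  rw [hL, hμ a, Measure.map_map (by fun_prop) hm]
  have hc : (fun x : Fin n → ℝ => ∑ i, a i * x i) ∘ lift1 V (fun i : Fin n => h ((((i : ℕ) : ℝ) + 1) / n))
      = fun x => ∑ j : Fin n, (√(h ((((j : ℕ) : ℝ) + 1) / n)) * (Vᵀ.mulVec a) j) * x j := by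
    ext x
    have : ∀ y, ∑ i, a i * y i = a ⬝ᵥ y := fun y => rfl
    simp only [Function.comp, this, lift1]
    rw [Matrix.dotProduct_mulVec, ← Matrix.mulVec_transpose]
    simp only [dotProduct]
    refine Finset.sum_congr rfl fun i _ => by ring
  rw [hc, pi_map_lin]
  congr 2
  simp only [specMatrix]
  rw [← Matrix.mulVec_mulVec, ← Matrix.mulVec_mulVec, Matrix.dotProduct_mulVec, ← Matrix.mulVec_transpose]
  simp only [dotProduct, Matrix.mulVec_diagonal]
  refine Finset.sum_congr rfl fun i _ => ?_
  rw [mul_pow, Real.sq_sqrt (hh i)]; ring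

lemma riemann (h : ℝ → ℝ) (hm : Measurable h) (C : ℝ)
    (hC : ∀ x ∈ Set.Icc (0 : ℝ) 1, |h x| ≤ C)
    (hc : ∀ᵐ x ∂(volume.restrict (Set.Icc (0 : ℝ) 1)), ContinuousAt h x) :
    Tendsto (fun n : ℕ => (∑ i : Fin n, h ((((i : ℕ) : ℝ) + 1) / n)) / n) atTop
      (𝓝 (∫ x in (0 : ℝ)..1, h x)) := by
  have key : Tendsto (fun n : ℕ => ∫ x in (0:ℝ)..1, h ((⌈x * n⌉₊ : ℝ) / n)) atTop
      (𝓝 (∫ x in (0 : ℝ)..1, h x)) := by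
    refine intervalIntegral.tendsto_integral_filter_of_dominated_convergence (fun _ => C) ?_ ?_ ?_ ?_
    · exact Eventually.of_forall fun n => Measurable.aestronglyMeasurable (by fun_prop)
    · filter_upwards [eventually_gt_atTop 0] with n hn
      refine Eventually.of_forall fun x hx => ?_
      rw [Set.uIoc_of_le zero_le_one] at hx
      refine hC _ ⟨by positivity, ?_⟩
      have hn' : (0:ℝ) < n := by exact_mod_cast hn
      rw [div_le_one hn']
      have : ⌈x * n⌉₊ ≤ n := Nat.ceil_le.2 (by nlinarith [hx.2])
      exact_mod_cast this
    · exact intervalIntegrable_const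
    · have := (ae_restrict_iff' measurableSet_Icc).1 hc
      filter_upwards [this] with x hx hx'
      rw [Set.uIoc_of_le zero_le_one] at hx'
      have h1 := hx ⟨hx'.1.le, hx'.2⟩
      exact h1.tendsto.comp ((tendsto_nat_ceil_mul_div_atTop hx'.1.le).comp tendsto_natCast_atTop_atTop)
  refine key.congr' ?_
  filter_upwards [eventually_gt_atTop 0] with n hn
  have hn' : (0:ℝ) < n := by exact_mod_cast hn
  have hI : ∀ k : ℕ, Set.EqOn (fun x : ℝ => h ((⌈x * n⌉₊ : ℝ) / n)) (fun _ => h (((k:ℝ)+1)/n))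
      (Set.uIoc ((k:ℝ)/n) (((k+1 : ℕ):ℝ)/n)) := by
    intro k x hx
    rw [Set.uIoc_of_le (by gcongr; simp)] at hx
    have h1 := (div_lt_iff₀ hn').1 hx.1
    have h2 := (le_div_iff₀ hn').1 hx.2
    have : ⌈x * n⌉₊ = k + 1 := by
      rw [Nat.ceil_eq_iff (by simp)]
      exact ⟨by simpa using h1, h2⟩
    simp [this]
  have e := intervalIntegral.sum_integral_adjacent_intervals (μ := volume)
    (f := fun x : ℝ => h ((⌈x * n⌉₊ : ℝ) / n)) (a := fun k : ℕ => (k:ℝ)/n) (n := n)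
    (fun k _ => (intervalIntegrable_const (c := h (((k:ℝ)+1)/n))).congr (hI k).symm)
  simp only [Nat.cast_zero, zero_div, div_self hn'.ne'] at e
  rw [← e, Fin.sum_univ_eq_sum_range (fun i : ℕ => h (((i : ℝ) + 1) / n)), Finset.sum_div]
  refine Finset.sum_congr rfl fun k _ => ?_
  rw [intervalIntegral.integral_congr_ae (g := fun _ => h (((k:ℝ)+1)/n)) (Eventually.of_forall fun x hx => hI k hx)]
  simp only [intervalIntegral.integral_const, smul_eq_mul]
  push_cast
  field_simp
  ring

lemma cheb {E : Type*} [MeasurableSpace E] (ν : Measure E) [IsProbabilityMeasure ν] (φ : E → ℝ)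
    (hφm : Measurable φ) (hφ : MemLp φ 2 ν) (a : (n : ℕ) → Fin n → ℝ) (C : ℝ) (hC : ∀ n i, |a n i| ≤ C)
    (c : ℝ) (hc : Tendsto (fun n : ℕ => (∑ i, a n i) / n * ∫ x, φ x ∂ν) atTop (𝓝 c)) :
    TendstoInProbability (fun n => Measure.map (fun ω : Fin n → E => (∑ i, a n i * φ (ω i)) / (n:ℝ))
      (Measure.pi fun _ => ν)) c := by
  intro δ hδ
  have hlim : Tendsto (fun n : ℕ => ENNReal.ofReal (C ^ 2 * Var[φ; ν] / (δ/2)^2 / n)) atTop (𝓝 0) := by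
    rw [← ENNReal.ofReal_zero]
    exact ENNReal.tendsto_ofReal (tendsto_const_div_atTop_nhds_zero_nat _)
  refine tendsto_of_tendsto_of_tendsto_of_le_of_le' tendsto_const_nhds hlim
    (Eventually.of_forall fun _ => zero_le) ?_
  have hev := (Metric.tendsto_nhds.1 hc) (δ/2) (by positivity)
  filter_upwards [hev, eventually_gt_atTop 0] with n hn hn0
  have hn' : (0:ℝ) < n := by exact_mod_cast hn0
  have hmS : Measurable (fun ω : Fin n → E => (∑ i, a n i * φ (ω i)) / (n:ℝ)) := by fun_prop
  rw [Measure.map_apply hmS (measurableSet_le (by fun_prop) (by fun_prop))]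
  have hS : (fun ω : Fin n → E => (∑ i, a n i * φ (ω i)) / (n:ℝ))
      = ∑ i, fun ω : Fin n → E => (a n i / n) * φ (ω i) := by
    ext ω
    simp only [Finset.sum_apply, Finset.sum_div]
    refine Finset.sum_congr rfl fun i _ => by ring
  have hLi : ∀ i : Fin n, MemLp (fun ω : Fin n → E => (a n i / n) * φ (ω i)) 2 (Measure.pi fun _ => ν) := fun i =>
    (hφ.comp_measurePreserving (measurePreserving_eval (fun _ => ν) i)).const_mul _
  have hL : MemLp (fun ω : Fin n → E => (∑ i, a n i * φ (ω i)) / (n:ℝ)) 2 (Measure.pi fun _ => ν) := by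
    rw [hS]; exact memLp_finsetSum' _ fun i _ => hLi i
  have hmean : ∫ ω : Fin n → E, (∑ i, a n i * φ (ω i)) / (n:ℝ) ∂(Measure.pi fun _ => ν)
      = (∑ i, a n i) / n * ∫ x, φ x ∂ν := by
    have : ∀ ω : Fin n → E, (∑ i, a n i * φ (ω i)) / (n:ℝ) = ∑ i, (a n i / n) * φ (ω i) := fun ω => by
      rw [Finset.sum_div]; exact Finset.sum_congr rfl fun i _ => by ring
    simp_rw [this]
    rw [integral_finsetSum _ fun i _ => (hLi i).integrable (by norm_num)]
    simp_rw [integral_const_mul]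
    simp_rw [integral_comp_eval (μ := fun _ : Fin n => ν) (f := φ) hφ.1]
    rw [← Finset.sum_mul, Finset.sum_div]
  have hvar : Var[fun ω : Fin n → E => (∑ i, a n i * φ (ω i)) / (n:ℝ); Measure.pi fun _ => ν]
      ≤ C ^ 2 * Var[φ; ν] / n := by
    rw [hS, variance_sum_pi (X := fun i x => (a n i / n) * φ x) (fun i => hφ.const_mul _)]
    simp_rw [variance_const_mul]
    have hb : ∀ i ∈ (Finset.univ : Finset (Fin n)), (a n i / n)^2 * Var[φ; ν] ≤ C^2 / n^2 * Var[φ; ν] := by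
      intro i _
      rw [div_pow]
      have h0 := variance_nonneg φ ν
      have : a n i ^ 2 ≤ C ^ 2 := sq_le_sq' (by linarith [neg_abs_le (a n i), hC n i]) (by linarith [le_abs_self (a n i), hC n i])
      gcongr
    refine (Finset.sum_le_sum hb).trans (le_of_eq ?_)
    simp only [Finset.sum_const, Finset.card_univ, Fintype.card_fin, nsmul_eq_mul]
    field_simp
  have hch := meas_ge_le_variance_div_sq hL (c := δ/2) (by positivity)
  rw [hmean] at hch
  refine (measure_mono ?_).trans (hch.trans (ENNReal.ofReal_le_ofReal ?_))
  · intro ω hω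
    simp only [Set.mem_preimage, Set.mem_ofPred_eq] at hω ⊢
    rw [Real.dist_eq] at hn
    have := abs_sub_le ((∑ i, a n i * φ (ω i)) / (n:ℝ)) ((∑ i, a n i) / n * ∫ x, φ x ∂ν) c
    linarith
  · calc _ ≤ C ^ 2 * Var[φ; ν] / n / (δ/2)^2 := by gcongr
      _ = _ := by ring

lemma prod_eq {n : ℕ} (V : Matrix (Fin n) (Fin n) ℝ) (f g : ℝ → ℝ)
    (hf : ∀ i : Fin n, 0 ≤ f ((((i : ℕ) : ℝ) + 1) / n))
    (hg : ∀ i : Fin n, 0 ≤ g ((((i : ℕ) : ℝ) + 1) / n)) (μ ε : Measure (Fin n → ℝ))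
    (hμ : IsCenteredGaussian μ (specMatrix n V f)) (hε : IsCenteredGaussian ε (specMatrix n V g))
    (T : (Fin n → ℝ) × (Fin n → ℝ) → ℝ) (hT : Measurable T) :
    Measure.map T (μ.prod ε) = Measure.map (fun ω : Fin n → ℝ × ℝ =>
      T (lift1 V (fun i : Fin n => f ((((i : ℕ) : ℝ) + 1) / n)) (fun i => (ω i).1),
         lift1 V (fun i : Fin n => g ((((i : ℕ) : ℝ) + 1) / n)) (fun i => (ω i).2)))
      (Measure.pi fun _ : Fin n => (gaussianReal 0 1).prod (gaussianReal 0 1)) := by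
  have mf := lift1_meas V (fun i : Fin n => f ((((i : ℕ) : ℝ) + 1) / n))
  have mg := lift1_meas V (fun i : Fin n => g ((((i : ℕ) : ℝ) + 1) / n))
  have hp := measurePreserving_arrowProdEquivProdArrow ℝ ℝ (Fin n)
    (fun _ => gaussianReal 0 1) (fun _ => gaussianReal 0 1)
  conv_lhs => rw [gauss_eq V f hf μ hμ, gauss_eq V g hg ε hε, Measure.map_prod_map _ _ mf mg,
    ← hp.map_eq, Measure.map_map hT (by fun_prop),
    Measure.map_map (by fun_prop) (by fun_prop)]
  rfl

lemma lift1_dot {n : ℕ} (V : Matrix (Fin n) (Fin n) ℝ) (hV : Vᵀ * V = 1) (d e x y : Fin n → ℝ) :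
    lift1 V d x ⬝ᵥ lift1 V e y = ∑ i, (√(d i) * x i) * (√(e i) * y i) := by
  unfold lift1
  rw [Matrix.dotProduct_mulVec, ← Matrix.mulVec_transpose, Matrix.mulVec_mulVec, hV, Matrix.one_mulVec]
  rfl

lemma lift1_spec {n : ℕ} (V : Matrix (Fin n) (Fin n) ℝ) (hV : Vᵀ * V = 1) (d x : Fin n → ℝ)
    (g : ℝ → ℝ) :
    lift1 V d x ⬝ᵥ (specMatrix n V g).mulVec (lift1 V d x)
      = ∑ i : Fin n, (√(d i) * x i) * (g ((((i : ℕ) : ℝ) + 1) / n) * (√(d i) * x i)) := by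
  unfold lift1 specMatrix
  rw [Matrix.mulVec_mulVec, Matrix.mul_assoc, hV, Matrix.mul_one, ← Matrix.mulVec_mulVec,
    Matrix.dotProduct_mulVec, ← Matrix.mulVec_transpose, Matrix.mulVec_mulVec, hV, Matrix.one_mulVec]
  simp only [dotProduct, Matrix.mulVec_diagonal]

lemma memLp_gauss_prod_fst (p : ENNReal) (hp : p ≠ ⊤) :
    MemLp (fun x : ℝ × ℝ => x.1) p ((gaussianReal 0 1).prod (gaussianReal 0 1)) :=
  (memLp_id_gaussianReal' p hp).comp_measurePreserving measurePreserving_fst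

lemma memLp_gauss_prod_snd (p : ENNReal) (hp : p ≠ ⊤) :
    MemLp (fun x : ℝ × ℝ => x.2) p ((gaussianReal 0 1).prod (gaussianReal 0 1)) :=
  (memLp_id_gaussianReal' p hp).comp_measurePreserving measurePreserving_snd

instance holder442 : ENNReal.HolderTriple 4 4 2 where
  inv_add_inv_eq_inv := by
    rw [← two_mul, show (4 : ENNReal) = 2 * 2 by norm_num,
      ENNReal.mul_inv (by simp) (by simp), ← mul_assoc, ENNReal.mul_inv_cancel (by simp) (by simp), one_mul]

lemma int_sq_gauss : ∫ x : ℝ, x * x ∂(gaussianReal 0 1) = 1 := by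
  have h := variance_id_gaussianReal (μ := 0) (v := 1)
  rw [variance_of_integral_eq_zero (by fun_prop) (by simp)] at h
  simpa [sq] using h

/-- **(Law-of-large-numbers lemmas for simultaneously diagonalizable Gaussians).**
With `Σ_X = V diag(f(i/n)) Vᵀ`, `Σ_ε = V diag(g(i/n)) Vᵀ`, `X ~ N(0,Σ_X)` and `ε ~ N(0,Σ_ε)`
independent, and `f, g` positive, bounded and Riemann integrable (i.e. a.e. continuous) on
`[0,1]`: `(1/n)‖X‖² → ∫f`, `(1/n)‖ε‖² → ∫g`, `(1/n)εᵀX → 0` and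
`(1/n)XᵀΣ_εX → ∫fg`, all in probability. -/
theorem ols_lln_convergences
    (V : (n : ℕ) → Matrix (Fin n) (Fin n) ℝ) (hV : ∀ n, (V n)ᵀ * V n = 1)
    (f g : ℝ → ℝ)
    (hf_meas : Measurable f) (hg_meas : Measurable g)
    (hf_pos : ∀ x ∈ Set.Icc (0 : ℝ) 1, 0 < f x) (hg_pos : ∀ x ∈ Set.Icc (0 : ℝ) 1, 0 < g x)
    (hf_bdd : ∃ C : ℝ, ∀ x ∈ Set.Icc (0 : ℝ) 1, f x ≤ C)
    (hg_bdd : ∃ C : ℝ, ∀ x ∈ Set.Icc (0 : ℝ) 1, g x ≤ C)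
    (hf_cont : ∀ᵐ x ∂(volume.restrict (Set.Icc (0 : ℝ) 1)), ContinuousAt f x)
    (hg_cont : ∀ᵐ x ∂(volume.restrict (Set.Icc (0 : ℝ) 1)), ContinuousAt g x)
    (μ ε : (n : ℕ) → Measure (Fin n → ℝ))
    (hμ : ∀ n, IsCenteredGaussian (μ n) (specMatrix n (V n) f))
    (hε : ∀ n, IsCenteredGaussian (ε n) (specMatrix n (V n) g)) :
    TendstoInProbability
      (fun n => Measure.map
        (fun p : (Fin n → ℝ) × (Fin n → ℝ) => (∑ i, p.1 i ^ 2) / (n : ℝ))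
        ((μ n).prod (ε n)))
      (∫ x in (0 : ℝ)..1, f x) ∧
    TendstoInProbability
      (fun n => Measure.map
        (fun p : (Fin n → ℝ) × (Fin n → ℝ) => (∑ i, p.2 i ^ 2) / (n : ℝ))
        ((μ n).prod (ε n)))
      (∫ x in (0 : ℝ)..1, g x) ∧
    TendstoInProbability
      (fun n => Measure.map
        (fun p : (Fin n → ℝ) × (Fin n → ℝ) => (∑ i, p.2 i * p.1 i) / (n : ℝ))
        ((μ n).prod (ε n)))
      0 ∧
    TendstoInProbability
      (fun n => Measure.map
        (fun p : (Fin n → ℝ) × (Fin n → ℝ) =>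
          (p.1 ⬝ᵥ (specMatrix n (V n) g).mulVec p.1) / (n : ℝ))
        ((μ n).prod (ε n)))
      (∫ x in (0 : ℝ)..1, f x * g x) := by
  obtain ⟨Cf, hCf⟩ := hf_bdd
  obtain ⟨Cg, hCg⟩ := hg_bdd
  have hmem : ∀ (n : ℕ) (i : Fin n), ((((i : ℕ) : ℝ) + 1) / n) ∈ Set.Icc (0:ℝ) 1 := by
    intro n i
    have hn : (0:ℝ) < n := by exact_mod_cast i.pos
    refine ⟨by positivity, (div_le_one hn).2 ?_⟩
    exact_mod_cast i.isLt
  have hfa : ∀ x ∈ Set.Icc (0 : ℝ) 1, |f x| ≤ Cf := fun x hx => by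
    rw [abs_of_pos (hf_pos x hx)]; exact hCf x hx
  have hga : ∀ x ∈ Set.Icc (0 : ℝ) 1, |g x| ≤ Cg := fun x hx => by
    rw [abs_of_pos (hg_pos x hx)]; exact hCg x hx
  have hfga : ∀ x ∈ Set.Icc (0 : ℝ) 1, |f x * g x| ≤ Cf * Cg := fun x hx => by
    rw [abs_mul]
    exact mul_le_mul (hfa x hx) (hga x hx) (abs_nonneg _) ((abs_nonneg _).trans (hfa x hx))
  have hf0 : ∀ (n : ℕ) (i : Fin n), 0 ≤ f ((((i : ℕ) : ℝ) + 1) / n) := fun n i => (hf_pos _ (hmem n i)).le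
  have hg0 : ∀ (n : ℕ) (i : Fin n), 0 ≤ g ((((i : ℕ) : ℝ) + 1) / n) := fun n i => (hg_pos _ (hmem n i)).le
  have Rf := riemann f hf_meas Cf hfa hf_cont
  have Rg := riemann g hg_meas Cg hga hg_cont
  have Rfg := riemann (fun x => f x * g x) (hf_meas.mul hg_meas) (Cf * Cg) hfga
    (by filter_upwards [hf_cont, hg_cont] with x h1 h2 using h1.mul h2)
  have L1 := memLp_gauss_prod_fst 4 (by simp)
  have L2 := memLp_gauss_prod_snd 4 (by simp)
  have e1 : ∫ x : ℝ × ℝ, x.1 * x.1 ∂((gaussianReal 0 1).prod (gaussianReal 0 1)) = 1 := by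
    have := integral_prod_mul (μ := gaussianReal 0 1) (ν := gaussianReal 0 1)
      (fun x : ℝ => x * x) (fun _ : ℝ => (1:ℝ))
    simpa [int_sq_gauss] using this
  have e2 : ∫ x : ℝ × ℝ, x.2 * x.2 ∂((gaussianReal 0 1).prod (gaussianReal 0 1)) = 1 := by
    have := integral_prod_mul (μ := gaussianReal 0 1) (ν := gaussianReal 0 1)
      (fun _ : ℝ => (1:ℝ)) (fun x : ℝ => x * x)
    simpa [int_sq_gauss] using this
  have e3 : ∫ x : ℝ × ℝ, x.2 * x.1 ∂((gaussianReal 0 1).prod (gaussianReal 0 1)) = 0 := by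
    have := integral_prod_mul (μ := gaussianReal 0 1) (ν := gaussianReal 0 1)
      (fun x : ℝ => x) (fun x : ℝ => x)
    have e : ∀ x : ℝ × ℝ, x.2 * x.1 = x.1 * x.2 := fun x => mul_comm _ _
    simp_rw [e]
    rw [this]
    simp
  refine ⟨?_, ?_, ?_, ?_⟩
  · have := cheb _ (fun x : ℝ × ℝ => x.1 * x.1) (by fun_prop) (L1.mul' L1 (r := 2))
      (fun n i => f ((((i : ℕ) : ℝ) + 1) / n)) Cf (fun n i => hfa _ (hmem n i)) _
      (by rw [e1]; simpa using Rf)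
    convert this using 2 with n
    rw [prod_eq (V n) f g (hf0 n) (hg0 n) _ _ (hμ n) (hε n) _ (by fun_prop)]
    congr 1
    ext ω
    congr 1
    have := lift1_dot (V n) (hV n) (fun i : Fin n => f ((((i : ℕ) : ℝ) + 1) / n))
      (fun i : Fin n => f ((((i : ℕ) : ℝ) + 1) / n)) (fun i => (ω i).1) (fun i => (ω i).1)
    simp only [sq]
    refine this.trans (Finset.sum_congr rfl fun i _ => ?_)
    linear_combination (ω i).1 * (ω i).1 * Real.mul_self_sqrt (hf0 n i)
  · have := cheb _ (fun x : ℝ × ℝ => x.2 * x.2) (by fun_prop) (L2.mul' L2 (r := 2))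
      (fun n i => g ((((i : ℕ) : ℝ) + 1) / n)) Cg (fun n i => hga _ (hmem n i)) _
      (by rw [e2]; simpa using Rg)
    convert this using 2 with n
    rw [prod_eq (V n) f g (hf0 n) (hg0 n) _ _ (hμ n) (hε n) _ (by fun_prop)]
    congr 1
    ext ω
    congr 1
    have := lift1_dot (V n) (hV n) (fun i : Fin n => g ((((i : ℕ) : ℝ) + 1) / n))
      (fun i : Fin n => g ((((i : ℕ) : ℝ) + 1) / n)) (fun i => (ω i).2) (fun i => (ω i).2)
    simp only [sq]
    refine this.trans (Finset.sum_congr rfl fun i _ => ?_)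
    linear_combination (ω i).2 * (ω i).2 * Real.mul_self_sqrt (hg0 n i)
  · have := cheb _ (fun x : ℝ × ℝ => x.2 * x.1) (by fun_prop) (L1.mul' L2 (r := 2))
      (fun n i => √(g ((((i : ℕ) : ℝ) + 1) / n)) * √(f ((((i : ℕ) : ℝ) + 1) / n))) (√Cg * √Cf)
      (fun n i => by
        rw [abs_of_nonneg (by positivity)]
        have h1 := Real.sqrt_le_sqrt (hCf _ (hmem n i))
        have h2 := Real.sqrt_le_sqrt (hCg _ (hmem n i))
        gcongr) 0
      (by rw [e3]; simp)
    convert this using 2 with n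
    rw [prod_eq (V n) f g (hf0 n) (hg0 n) _ _ (hμ n) (hε n) _ (by fun_prop)]
    congr 1
    ext ω
    congr 1
    have := lift1_dot (V n) (hV n) (fun i : Fin n => g ((((i : ℕ) : ℝ) + 1) / n))
      (fun i : Fin n => f ((((i : ℕ) : ℝ) + 1) / n)) (fun i => (ω i).2) (fun i => (ω i).1)
    refine this.trans (Finset.sum_congr rfl fun i _ => ?_)
    ring
  · have := cheb _ (fun x : ℝ × ℝ => x.1 * x.1) (by fun_prop) (L1.mul' L1 (r := 2))
      (fun n i => f ((((i : ℕ) : ℝ) + 1) / n) * g ((((i : ℕ) : ℝ) + 1) / n)) (Cf * Cg)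
      (fun n i => hfga _ (hmem n i)) _
      (by rw [e1]; simpa using Rfg)
    convert this using 2 with n
    rw [prod_eq (V n) f g (hf0 n) (hg0 n) _ _ (hμ n) (hε n) _
      (by simp only [Matrix.mulVec, dotProduct]; fun_prop)]
    congr 1
    ext ω
    congr 1
    refine (lift1_spec (V n) (hV n) _ _ g).trans (Finset.sum_congr rfl fun i _ => ?_)
    linear_combination (ω i).1 * (ω i).1 * g ((((i : ℕ) : ℝ) + 1) / n) * Real.mul_self_sqrt (hf0 n i)

end
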